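/- arXiv:1706.03722 — 4 statements merged into one kernel-verified Lean document; each statement's English description precedes it below -/
import Mathlib

section
/- Let A and B be types and R : A → B → Prop a binary relation. Suppose there are maps a : 𝒫(ℕ) → A and b : 𝒫(𝒫(ℕ)) → B such that for all J ⊆ ℕ and all I ⊆ 𝒫(ℕ), R (a J) (b I) holds if and only if J ∈ I. Then there is an injective map b' : ℕ → B such that for every subset I ⊆ ℕ there exists x ∈ A with: for all i ∈ ℕ, R x (b' i) holds if and only if i ∈ I. (In particular, the opposite relation of R shatters an infinite subset of B.) -/
/-!
The principal ultrafilters `{J | i ∈ J}` are themselves subsets of `Set ι`, and membership in them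
exchanges the two sides: `J ∈ {J | i ∈ J} ↔ i ∈ J`. So if every set of subsets of `ι` is cut out
from the family `a` by a parameter, the parameters of the principal ultrafilters are shattered in
turn, with `a J` cutting out `J`.
-/

section

variable {A B ι : Type*} {R : A → B → Prop}

/-- The relation `R` shatters the family `c`: every set of indices is cut out by some `x`.
The parameter `x` is the first argument of `R`, so for a formula `φ(x; y)` this is shattering by
`φ^opp`, and shattering by `φ` itself is `Shatters (flip R)`. -/
def Shatters (R : A → B → Prop) (c : ι → B) : Prop :=
  ∀ I : Set ι, ∃ x : A, ∀ i : ι, R x (c i) ↔ i ∈ I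

theorem Shatters.injective {c : ι → B} (hc : Shatters R c) : Function.Injective c := by
  intro i j hij
  obtain ⟨x, hx⟩ := hc {j}
  have hxi : R x (c i) := hij ▸ (hx j).2 rfl
  exact (hx i).1 hxi

theorem Shatters.exists_shatters_of_flip {a : Set ι → A} (ha : Shatters (flip R) a) :
    ∃ c : ι → B, Shatters R c := by
  choose b hb using ha
  exact ⟨fun i ↦ b {J | i ∈ J}, fun J ↦ ⟨a J, fun i ↦ hb {J | i ∈ J} J⟩⟩

theorem ip_of_opp_ip_general {a : Set ι → A} (ha : Shatters (flip R) a) :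
    ∃ c : ι → B, Function.Injective c ∧ Shatters R c :=
  let ⟨c, hc⟩ := ha.exists_shatters_of_flip
  ⟨c, hc.injective, hc⟩

end

theorem ip_of_opp_ip {A B : Type*} (R : A → B → Prop)
    (a : Set ℕ → A) (b : Set (Set ℕ) → B)
    (h : ∀ (J : Set ℕ) (I : Set (Set ℕ)), R (a J) (b I) ↔ J ∈ I) :
    ∃ b' : ℕ → B, Function.Injective b' ∧
      ∀ I : Set ℕ, ∃ x : A, ∀ i : ℕ, R x (b' i) ↔ i ∈ I :=
  ip_of_opp_ip_general fun I ↦ ⟨b I, fun J ↦ h J I⟩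
end

section
/- Let A and B be types, R : A → B → Prop a binary relation, a : ℕ → A an injective map, and b : 𝒫(ℕ) → B a map such that for every x ∈ A and every I ⊆ ℕ: R x (b I) holds if and only if x = a i for some i ∈ I. Then there exists an array b' : ℕ → ℕ → B such that: (i) for every function σ : ℕ → ℕ and every n ∈ ℕ there exists x ∈ A with R x (b' i (σ i)) for all i < n; and (ii) for every i and all j ≠ k there is no x ∈ A with both R x (b' i j) and R x (b' i k). -/
/-!
A finitely supported function `p : ι →₀ κ` is a finite approximation of a path through an `ι × κ`
array. The sets `{p | p i = j}` of approximations passing through the cell `(i, j)` are disjoint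
along each row, and finitely many cells of a path always have a common approximation. There are
only countably many `p : ℕ →₀ ℕ`, so this array of sets can be copied into any infinite set `S`;
if `R` only shatters `S`, each set in the copy is cut out by an element of `B`.
-/

open Function Set

section

variable {A A' B ι κ : Type*} {R : A → B → Prop} {S : Set A}

/-- The relation `R` only shatters `S`: every subset of `S` is cut out by some `y` in all of `A`,
not merely among the points of `S` as in ordinary shattering. -/
def OnlyShatters (R : A → B → Prop) (S : Set A) : Prop :=
  ∀ T ⊆ S, ∃ y, ∀ x, R x y ↔ x ∈ T

theorem onlyShatters_range_of_forall_iff {a : ι → A} {b : Set ι → B}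
    (h : ∀ x I, R x (b I) ↔ ∃ i ∈ I, x = a i) : OnlyShatters R (range a) := by
  intro T hT
  refine ⟨b (a ⁻¹' T), fun x ↦ (h x _).trans ⟨?_, fun hx ↦ ?_⟩⟩
  · rintro ⟨i, hi, rfl⟩
    exact hi
  · obtain ⟨i, rfl⟩ := hT hx
    exact ⟨i, hx, rfl⟩

/-- The array `c` witnesses the tree property of the second kind (TP₂) for `R`, with row index `i`
and column index `j`. Rows are required to be 2-inconsistent, and paths consistent on finite sets of
rows only. -/
structure IsTP2Array (R : A → B → Prop) (c : ι → κ → B) : Prop where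
  path_consistent (σ : ι → κ) (s : Finset ι) : ∃ x, ∀ i ∈ s, R x (c i (σ i))
  row_inconsistent (i : ι) : Pairwise fun j k ↦ ¬ ∃ x, R x (c i j) ∧ R x (c i k)

theorem isTP2Array_mem_finsupp [Zero κ] :
    IsTP2Array (fun (p : ι →₀ κ) (T : Set (ι →₀ κ)) ↦ p ∈ T) fun i j ↦ {p | p i = j} where
  path_consistent σ s := ⟨.indicator s fun i _ ↦ σ i, fun _ hi ↦ Finsupp.indicator_of_mem hi _⟩
  row_inconsistent _ _ _ hjk := fun ⟨_, hj, hk⟩ ↦ hjk (hj.symm.trans hk)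

theorem IsTP2Array.image {c : ι → κ → Set A} (hc : IsTP2Array (· ∈ ·) c) {f : A → A'}
    (hf : Injective f) : IsTP2Array (· ∈ ·) fun i j ↦ f '' c i j where
  path_consistent σ s :=
    let ⟨x, hx⟩ := hc.path_consistent σ s
    ⟨f x, fun i hi ↦ mem_image_of_mem f (hx i hi)⟩
  row_inconsistent i j k hjk := by
    rintro ⟨_, ⟨x, hxj, rfl⟩, hxk⟩
    exact hc.row_inconsistent i hjk ⟨x, hxj, hf.mem_set_image.mp hxk⟩

theorem OnlyShatters.exists_isTP2Array (hR : OnlyShatters R S) {c : ι → κ → Set A}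
    (hcS : ∀ i j, c i j ⊆ S) (hc : IsTP2Array (· ∈ ·) c) :
    ∃ b : ι → κ → B, IsTP2Array R b := by
  choose b hb using fun i j ↦ hR (c i j) (hcS i j)
  exact ⟨b, by simpa only [hb] using hc.path_consistent,
    by simpa only [hb] using hc.row_inconsistent⟩

theorem exists_isTP2Array_mem_of_infinite (hS : S.Infinite) :
    ∃ c : ℕ → ℕ → Set A, (∀ i j, c i j ⊆ S) ∧ IsTP2Array (· ∈ ·) c := by
  obtain ⟨e, he⟩ := exists_injective_nat (ℕ →₀ ℕ)
  let f (p : ℕ →₀ ℕ) : A := hS.natEmbedding S (e p)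
  have hf : Injective f := Subtype.val_injective.comp ((hS.natEmbedding S).injective.comp he)
  refine ⟨fun i j ↦ f '' {p | p i = j}, fun i j ↦ ?_, isTP2Array_mem_finsupp.image hf⟩
  exact image_subset_iff.mpr fun p _ ↦ (hS.natEmbedding S (e p)).property

theorem tp2_of_only_shatters_general (hS : S.Infinite) (hR : OnlyShatters R S) :
    ∃ b' : ℕ → ℕ → B,
      (∀ σ : ℕ → ℕ, ∀ n : ℕ, ∃ x : A, ∀ i < n, R x (b' i (σ i))) ∧
      (∀ i j k : ℕ, j ≠ k → ¬ ∃ x : A, R x (b' i j) ∧ R x (b' i k)) := by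
  obtain ⟨c, hcS, hc⟩ := exists_isTP2Array_mem_of_infinite hS
  obtain ⟨b', hb'⟩ := hR.exists_isTP2Array hcS hc
  refine ⟨b', fun σ n ↦ ?_, fun i _ _ hjk ↦ hb'.row_inconsistent i hjk⟩
  simpa only [Finset.mem_range] using hb'.path_consistent σ (Finset.range n)

end

theorem tp2_of_only_shatters {A B : Type*} (R : A → B → Prop)
    (a : ℕ → A) (ha : Function.Injective a) (b : Set ℕ → B)
    (h : ∀ (x : A) (I : Set ℕ), R x (b I) ↔ ∃ i ∈ I, x = a i) :
    ∃ b' : ℕ → ℕ → B,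
      (∀ σ : ℕ → ℕ, ∀ n : ℕ, ∃ x : A, ∀ i < n, R x (b' i (σ i))) ∧
      (∀ i j k : ℕ, j ≠ k → ¬ ∃ x : A, R x (b' i j) ∧ R x (b' i k)) :=
  tp2_of_only_shatters_general (infinite_range_of_injective ha) (onlyShatters_range_of_forall_iff h)
end

section
/- Let p : ℕ → ℕ enumerate the prime numbers in increasing order (p 0 = 2, p 1 = 3, ...). Define sets A i j ⊆ ℕ recursively by A 0 j = { (p j)^n : n ≥ 1 } and A (i+1) j = { (p n)^m : n ∈ ℕ, m ∈ A i j }. Then for every function α : ℕ → ℕ and every N ∈ ℕ, the intersection ⋂_{i < N} A i (α i) is nonempty; indeed the iterated power tower p_{α(0)}^{p_{α(1)}^{⋰^{p_{α(N-1)}}}} lies in A i (α i) for every i < N. -/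
/-- The sets `A i j` of iterated prime power towers, relative to an
enumeration `p` of the primes: `A 0 j = {(p j)^n : n ≥ 1}` and
`A (i+1) j = {(p n)^m : n ∈ ℕ, m ∈ A i j}`. -/
def towerSets (p : ℕ → ℕ) : ℕ → ℕ → Set ℕ
  | 0, j => {x | ∃ n : ℕ, 1 ≤ n ∧ x = p j ^ n}
  | i + 1, j => {x | ∃ n m : ℕ, m ∈ towerSets p i j ∧ x = p n ^ m}

/-- The iterated power tower `p (α 0) ^ (p (α 1) ^ (⋯ ^ p (α (N-1))))` of height `N`
(with the convention that the empty tower is `1`). -/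
def primeTower (p : ℕ → ℕ) : (ℕ → ℕ) → ℕ → ℕ
  | _, 0 => 1
  | α, N + 1 => p (α 0) ^ primeTower p (fun i => α (i + 1)) N

section

variable {p α : ℕ → ℕ}

theorem pow_mem_towerSets_zero (j : ℕ) {n : ℕ} (hn : 0 < n) :
    p j ^ n ∈ towerSets p 0 j :=
  ⟨n, hn, rfl⟩

theorem pow_mem_towerSets_succ {i j m : ℕ} (hm : m ∈ towerSets p i j) (n : ℕ) :
    p n ^ m ∈ towerSets p (i + 1) j :=
  ⟨n, m, hm, rfl⟩

theorem primeTower_pos (h : 0 < p (α 0)) (N : ℕ) : 0 < primeTower p α N := by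
  cases N with
  | zero => exact Nat.one_pos
  | succ N => exact Nat.pow_pos h

theorem primeTower_mem_towerSets {i N : ℕ} (h : 0 < p (α (i + 1))) (hi : i < N) :
    primeTower p α N ∈ towerSets p i (α i) := by
  induction N generalizing α i with
  | zero => exact absurd hi i.not_lt_zero
  | succ N ih =>
    cases i with
    | zero =>
      have tail_pos : 0 < primeTower p (fun k => α (k + 1)) N := primeTower_pos h N
      exact pow_mem_towerSets_zero (α 0) tail_pos
    | succ i =>
      have tail_mem : primeTower p (fun k => α (k + 1)) N ∈ towerSets p i (α (i + 1)) :=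
        ih (α := fun k => α (k + 1)) h (Nat.lt_of_succ_lt_succ hi)
      exact pow_mem_towerSets_succ tail_mem (α 0)

theorem towerSets_inter_nonempty_general (hpos : ∀ i, 0 < p (α i)) (N : ℕ) :
    (∀ i < N, primeTower p α N ∈ towerSets p i (α i)) ∧
      (⋂ i < N, towerSets p i (α i)).Nonempty := by
  have hmem : ∀ i < N, primeTower p α N ∈ towerSets p i (α i) :=
    fun i hi => primeTower_mem_towerSets (hpos (i + 1)) hi
  exact ⟨hmem, primeTower p α N, Set.mem_iInter₂.2 hmem⟩

end

theorem towerSets_inter_nonempty (p : ℕ → ℕ)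
    (hp_mono : StrictMono p) (hp_prime : ∀ n : ℕ, (p n).Prime)
    (hp_surj : ∀ q : ℕ, q.Prime → ∃ n : ℕ, p n = q)
    (α : ℕ → ℕ) (N : ℕ) :
    (∀ i < N, primeTower p α N ∈ towerSets p i (α i)) ∧
      (⋂ i < N, towerSets p i (α i)).Nonempty :=
  towerSets_inter_nonempty_general (fun i => (hp_prime (α i)).pos) N
end

section
/- Let p : ℕ → ℕ enumerate the prime numbers in increasing order (p 0 = 2, p 1 = 3, ...). Define sets A i j ⊆ ℕ recursively by A 0 j = { (p j)^n : n ≥ 1 } and A (i+1) j = { (p n)^m : n ∈ ℕ, m ∈ A i j }. Then for every i ∈ ℕ and all j ≠ k, the sets A i j and A i k are disjoint. -/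
/-! A positive power of a prime determines both the prime and the exponent, so `(n, m) ↦ p n ^ m` is
injective on pairs with `m > 0`. Each tower set is the image under this map of a product: its first
factor is `{j}` at level `0`, and its second factor is the set one level lower above that. Injective
images of disjoint sets are disjoint, so disjointness passes from each level to the next. Since
`p n ^ 0 = 1` forgets `n`, this needs all exponents, that is, all lower towers, to be positive. -/

theorem injOn_pow_of_pairwise_coprime {ι : Type*} {b : ι → ℕ} (hb : ∀ i, 1 < b i)
    (hcop : Pairwise (Function.onFun Nat.Coprime b)) :
    Set.InjOn (fun x : ι × ℕ ↦ b x.1 ^ x.2) (Set.univ ×ˢ Set.Ioi 0) := by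
  rintro ⟨i, m⟩ ⟨-, hm⟩ ⟨j, n⟩ - (h : b i ^ m = b j ^ n)
  obtain rfl : i = j := by
    by_contra hij
    have hone : b i ^ m = 1 := by
      have hpow : (b i ^ m).Coprime (b j ^ n) := (hcop hij).pow m n
      rwa [← h, Nat.coprime_self] at hpow
    exact (Nat.one_lt_pow (Set.mem_Ioi.1 hm).ne' (hb i)).ne' hone
  rw [Nat.pow_right_injective (hb i) h]

theorem pos_of_injOn_pow {ι : Type*} {b : ι → ℕ}
    (hb : Set.InjOn (fun x : ι × ℕ ↦ b x.1 ^ x.2) (Set.univ ×ˢ Set.Ioi 0)) (i : ι) :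
    0 < b i := by
  refine Nat.pos_of_ne_zero fun hzero ↦ ?_
  have hpair : (i, 1) = (i, 2) := hb (by simp) (by simp) (by simp [hzero])
  simp at hpair

section TowerSets

variable {p : ℕ → ℕ}

theorem towerSets_zero (j : ℕ) :
    towerSets p 0 j = (fun x : ℕ × ℕ ↦ p x.1 ^ x.2) '' ({j} ×ˢ Set.Ioi 0) := by
  ext x
  simp [towerSets, Nat.one_le_iff_ne_zero, Nat.pos_iff_ne_zero, eq_comm]

theorem towerSets_succ (i j : ℕ) :
    towerSets p (i + 1) j =
      (fun x : ℕ × ℕ ↦ p x.1 ^ x.2) '' (Set.univ ×ˢ towerSets p i j) := by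
  ext x
  simp [towerSets, eq_comm]

theorem towerSets_subset_Ioi (hp : ∀ n, 0 < p n) (i j : ℕ) : towerSets p i j ⊆ Set.Ioi 0 := by
  cases i with
  | zero =>
    rintro _ ⟨n, -, rfl⟩
    exact Nat.pow_pos (hp j)
  | succ i =>
    rintro _ ⟨n, m, -, rfl⟩
    exact Nat.pow_pos (hp n)

theorem towerSets_disjoint_general
    (hp : Set.InjOn (fun x : ℕ × ℕ ↦ p x.1 ^ x.2) (Set.univ ×ˢ Set.Ioi 0))
    (i : ℕ) {j k : ℕ} (hjk : j ≠ k) : Disjoint (towerSets p i j) (towerSets p i k) := by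
  induction i with
  | zero =>
    have hprod : Disjoint ({j} ×ˢ Set.Ioi 0 : Set (ℕ × ℕ)) ({k} ×ˢ Set.Ioi 0) :=
      Set.Disjoint.set_prod_left (Set.disjoint_singleton.2 hjk) _ _
    simp only [towerSets_zero]
    exact hprod.image hp (Set.prod_mono_left (Set.subset_univ _))
      (Set.prod_mono_left (Set.subset_univ _))
  | succ i ih =>
    have hpos := towerSets_subset_Ioi (pos_of_injOn_pow hp) i
    simp only [towerSets_succ]
    exact (Set.Disjoint.set_prod_right ih _ _).image hp (Set.prod_mono_right (hpos j))
      (Set.prod_mono_right (hpos k))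

end TowerSets

theorem towerSets_disjoint (p : ℕ → ℕ)
    (hp_mono : StrictMono p) (hp_prime : ∀ n : ℕ, (p n).Prime)
    (hp_surj : ∀ q : ℕ, q.Prime → ∃ n : ℕ, p n = q)
    (i j k : ℕ) (hjk : j ≠ k) :
    Disjoint (towerSets p i j) (towerSets p i k) :=
  have hcop : Pairwise (Function.onFun Nat.Coprime p) := fun m n hmn ↦
    (Nat.coprime_primes (hp_prime m) (hp_prime n)).2 (hp_mono.injective.ne hmn)
  towerSets_disjoint_general
    (injOn_pow_of_pairwise_coprime (fun n ↦ (hp_prime n).one_lt) hcop) i hjk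
end
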